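/- For all m ≥ 1 and n ≥ 2, there is a translation from m-variable intuitionistic propositional logic to n-variable intuitionistic propositional logic that is both consequence-respecting and tautology-respecting. -/

import Mathlib

/-!
The translation is a substitution `φ ↦ φ'` sending the variable `x_i` to `C_i` and `⊥` to
`C_0 ∧ … ∧ C_m`, where the `C_i` are formulas in two variables `p, q` (`PropForm.subst`).  Since
`⊥'` entails every `C_i` with `i < m`, it entails every translated formula, so the translation
preserves derivability (`Prov.subst`).

For the converse, consider the Kripke frame `Gadget` with a Rieger–Nishimura ladder
`0, 1, 2, …` (where `q` holds, and `p` holds at `0` only) and further points `a_j`, at which neither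
`p` nor `q` holds and which see exactly the rungs `k ≤ j` of the ladder.  With `B_n` the formula
true at the rungs `k < n`, the formula `A_j = (q → B_{j+1}) → q ∨ (q → B_j)` fails at
`a_j` and nowhere else in the gadget, so `C_i = A_{2i} ∨ A_{2i+1}` holds throughout the gadget, and
hence so does every translated formula.

Now put any Kripke model for the variables `x_i` below the gadget, letting a world see the whole
ladder, and see `a_{2i}` and `a_{2i+1}` exactly when `x_i` fails there (for `i ≥ m`: always).  Then
`C_i` holds at a world iff `x_i` does, `⊥'` holds nowhere, and thus `φ'` holds at a world iff `φ`
does.  This gluing is carried out syntactically, with no completeness theorem: `glue ψ` is the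
formula in the `x_i` that describes the worlds at which `ψ` holds.  It satisfies
`Γ ⊢ ψ ⇒ glue Γ ⊢ glue ψ` (`Prov.glue`) and `glue φ' ⊣⊢ φ` (`glue_subst`).
-/

/-- Propositional formulas over a set `V` of variables, built from `∧, ∨, →, ⊥, ⊤`.
`¬φ` is the abbreviation `φ → ⊥`. -/
inductive PropForm (V : Type) : Type
  | var : V → PropForm V
  | bot : PropForm V
  | top : PropForm V
  | and : PropForm V → PropForm V → PropForm V
  | or : PropForm V → PropForm V → PropForm V
  | imp : PropForm V → PropForm V → PropForm V

/-- A natural-deduction style consequence relation.  When the parameter `cl` is `False`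
this is exactly the consequence relation `⊢` of intuitionistic propositional logic;
when `cl` is `True` the rule of excluded middle becomes available and it is the
consequence relation `⊢_C` of classical propositional logic. -/
inductive Prov {V : Type} (cl : Prop) : Set (PropForm V) → PropForm V → Prop
  | ax : ∀ {Γ : Set (PropForm V)} {φ}, φ ∈ Γ → Prov cl Γ φ
  | topI : ∀ {Γ}, Prov cl Γ .top
  | botE : ∀ {Γ φ}, Prov cl Γ .bot → Prov cl Γ φ
  | andI : ∀ {Γ φ ψ}, Prov cl Γ φ → Prov cl Γ ψ → Prov cl Γ (.and φ ψ)
  | andE1 : ∀ {Γ φ ψ}, Prov cl Γ (.and φ ψ) → Prov cl Γ φ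
  | andE2 : ∀ {Γ φ ψ}, Prov cl Γ (.and φ ψ) → Prov cl Γ ψ
  | orI1 : ∀ {Γ φ ψ}, Prov cl Γ φ → Prov cl Γ (.or φ ψ)
  | orI2 : ∀ {Γ φ ψ}, Prov cl Γ ψ → Prov cl Γ (.or φ ψ)
  | orE : ∀ {Γ φ ψ χ}, Prov cl Γ (.or φ ψ) → Prov cl (insert φ Γ) χ →
      Prov cl (insert ψ Γ) χ → Prov cl Γ χ
  | impI : ∀ {Γ φ ψ}, Prov cl (insert φ Γ) ψ → Prov cl Γ (.imp φ ψ)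
  | impE : ∀ {Γ φ ψ}, Prov cl Γ (.imp φ ψ) → Prov cl Γ φ → Prov cl Γ ψ
  | em : ∀ {Γ φ}, cl → Prov cl Γ (.or φ (.imp φ .bot))

/-- Intuitionistic consequence `Γ ⊢ φ`. -/
abbrev IProv {V : Type} (Γ : Set (PropForm V)) (φ : PropForm V) : Prop := Prov False Γ φ

/-- Classical consequence `Γ ⊢_C φ`. -/
abbrev CProv {V : Type} (Γ : Set (PropForm V)) (φ : PropForm V) : Prop := Prov True Γ φ

theorem Prov.mono {V : Type} {cl : Prop} {Γ : Set (PropForm V)} {φ : PropForm V}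
    (h : Prov cl Γ φ) : ∀ {Δ : Set (PropForm V)}, Γ ⊆ Δ → Prov cl Δ φ := by
  induction h with
  | ax hmem => intro Δ hsub; exact Prov.ax (hsub hmem)
  | topI => intro Δ _; exact Prov.topI
  | botE _ ih => intro Δ hsub; exact Prov.botE (ih hsub)
  | andI _ _ ih1 ih2 => intro Δ hsub; exact Prov.andI (ih1 hsub) (ih2 hsub)
  | andE1 _ ih => intro Δ hsub; exact Prov.andE1 (ih hsub)
  | andE2 _ ih => intro Δ hsub; exact Prov.andE2 (ih hsub)
  | orI1 _ ih => intro Δ hsub; exact Prov.orI1 (ih hsub)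
  | orI2 _ ih => intro Δ hsub; exact Prov.orI2 (ih hsub)
  | orE _ _ _ ih1 ih2 ih3 =>
      intro Δ hsub
      exact Prov.orE (ih1 hsub) (ih2 (Set.insert_subset_insert hsub))
        (ih3 (Set.insert_subset_insert hsub))
  | impI _ ih => intro Δ hsub; exact Prov.impI (ih (Set.insert_subset_insert hsub))
  | impE _ _ ih1 ih2 => intro Δ hsub; exact Prov.impE (ih1 hsub) (ih2 hsub)
  | em hcl => intro Δ _; exact Prov.em hcl

theorem Prov.cut {V : Type} {cl : Prop} {Γ : Set (PropForm V)} {φ ψ : PropForm V}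
    (h1 : Prov cl Γ φ) (h2 : Prov cl (insert φ Γ) ψ) : Prov cl Γ ψ :=
  Prov.impE (Prov.impI h2) h1

/-- Single-premise consequence: `φ ⊢ ψ` (intuitionistic when `cl = False`). -/
def Entails {V : Type} (cl : Prop) (φ ψ : PropForm V) : Prop := Prov cl {φ} ψ

theorem Entails.refl {V : Type} {cl : Prop} (φ : PropForm V) : Entails cl φ φ := Prov.ax rfl

theorem Entails.trans' {V : Type} {cl : Prop} {φ ψ χ : PropForm V}
    (h1 : Entails cl φ ψ) (h2 : Entails cl ψ χ) : Entails cl φ χ :=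
  Prov.cut h1 (h2.mono (Set.singleton_subset_iff.mpr (Set.mem_insert _ _)))

theorem Entails.and_congr {V : Type} {cl : Prop} {a b c d : PropForm V}
    (h1 : Entails cl a b) (h2 : Entails cl c d) :
    Entails cl (PropForm.and a c) (PropForm.and b d) := by
  have ha : Prov cl ({PropForm.and a c} : Set (PropForm V)) a := Prov.andE1 (Prov.ax rfl)
  have hc : Prov cl ({PropForm.and a c} : Set (PropForm V)) c := Prov.andE2 (Prov.ax rfl)
  exact Prov.andI
    (Prov.cut ha (h1.mono (Set.singleton_subset_iff.mpr (Set.mem_insert _ _))))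
    (Prov.cut hc (h2.mono (Set.singleton_subset_iff.mpr (Set.mem_insert _ _))))

theorem Entails.or_congr {V : Type} {cl : Prop} {a b c d : PropForm V}
    (h1 : Entails cl a b) (h2 : Entails cl c d) :
    Entails cl (PropForm.or a c) (PropForm.or b d) :=
  Prov.orE (Prov.ax rfl)
    (Prov.orI1 (h1.mono (Set.singleton_subset_iff.mpr (Set.mem_insert _ _))))
    (Prov.orI2 (h2.mono (Set.singleton_subset_iff.mpr (Set.mem_insert _ _))))

/-- Logical equivalence (intuitionistic when `cl = False`, classical when `cl = True`). -/
def provSetoid (cl : Prop) (V : Type) : Setoid (PropForm V) where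
  r φ ψ := Entails cl φ ψ ∧ Entails cl ψ φ
  iseqv := ⟨fun φ => ⟨Entails.refl φ, Entails.refl φ⟩, fun h => ⟨h.2, h.1⟩,
    fun h1 h2 => ⟨h1.1.trans' h2.1, h2.2.trans' h1.2⟩⟩

/-- The Lindenbaum algebra of formulas over `V` modulo logical equivalence.
`Lindenbaum False (Fin n)` is the free Heyting algebra `H_n`,
`Lindenbaum False ℕ` is `H_ω`, and `Lindenbaum True ℕ` is the free Boolean
algebra `B_ω`. -/
def Lindenbaum (cl : Prop) (V : Type) : Type := Quotient (provSetoid cl V)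

/-- The equivalence class of a formula. -/
def Lindenbaum.mk (cl : Prop) {V : Type} (φ : PropForm V) : Lindenbaum cl V :=
  Quotient.mk (provSetoid cl V) φ

/-- The order of the Lindenbaum algebra: `[φ] ≤ [ψ]` iff `φ ⊢ ψ`. -/
def Lindenbaum.le {cl : Prop} {V : Type} : Lindenbaum cl V → Lindenbaum cl V → Prop :=
  Quotient.lift₂ (Entails cl) (by
    intro a b a' b' ha hb
    obtain ⟨ha1, ha2⟩ := ha
    obtain ⟨hb1, hb2⟩ := hb
    exact propext ⟨fun h => (ha2.trans' h).trans' hb1, fun h => (ha1.trans' h).trans' hb2⟩)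

/-- The meet `∧` of the Lindenbaum algebra. -/
def Lindenbaum.inf {cl : Prop} {V : Type} :
    Lindenbaum cl V → Lindenbaum cl V → Lindenbaum cl V :=
  Quotient.map₂ PropForm.and (by
    intro a a' ha b b' hb
    obtain ⟨ha1, ha2⟩ := ha
    obtain ⟨hb1, hb2⟩ := hb
    exact ⟨ha1.and_congr hb1, ha2.and_congr hb2⟩)

/-- The join `∨` of the Lindenbaum algebra. -/
def Lindenbaum.sup {cl : Prop} {V : Type} :
    Lindenbaum cl V → Lindenbaum cl V → Lindenbaum cl V :=
  Quotient.map₂ PropForm.or (by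
    intro a a' ha b b' hb
    obtain ⟨ha1, ha2⟩ := ha
    obtain ⟨hb1, hb2⟩ := hb
    exact ⟨ha1.or_congr hb1, ha2.or_congr hb2⟩)

namespace PropForm

/-- The conjunction of a finite list of formulas. -/
def conj {V : Type} : List (PropForm V) → PropForm V
  | [] => top
  | χ :: l => and χ (conj l)

theorem prov_conj {V : Type} {cl : Prop} {Γ : Set (PropForm V)} {l : List (PropForm V)} :
    Prov cl Γ (conj l) ↔ ∀ χ ∈ l, Prov cl Γ χ := by
  induction l with
  | nil => simpa [conj] using Prov.topI
  | cons χ l ih =>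
    simp only [conj, List.forall_mem_cons, ← ih]
    exact ⟨fun h => ⟨h.andE1, h.andE2⟩, fun h => .andI h.1 h.2⟩

/-! ### The gadget -/

/-- The points of the upper frame: `inl k` is the `k`-th rung of the Rieger–Nishimura ladder,
`inr j` is the point `a_j`. -/
abbrev Gadget : Type := ℕ ⊕ ℕ

/-- The accessibility relation of the gadget: `Sees x y` says that `y` lies above `x`. -/
def Sees : Gadget → Gadget → Prop
  | .inl k, .inl l => l = k ∨ l + 2 ≤ k
  | .inl _, .inr _ => False
  | .inr j, .inl k => k ≤ j
  | .inr j, .inr l => l = j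

theorem Sees.refl (x : Gadget) : Sees x x := by
  cases x <;> simp [Sees]

theorem Sees.trans {x y z : Gadget} (h : Sees x y) (h' : Sees y z) : Sees x z := by
  cases x <;> cases y <;> cases z <;> simp only [Sees] at * <;> omega

/-- Kripke forcing in the gadget.  The variable `q` has index `1`; it holds on the whole ladder.  All
the other variables, in particular `p` of index `0`, hold at the rung `0` only. -/
def Force {n : ℕ} : PropForm (Fin n) → Gadget → Prop
  | var v, .inl k => v.val = 1 ∨ k = 0
  | var _, .inr _ => False
  | bot, _ => False
  | top, _ => True
  | and φ ψ, x => Force φ x ∧ Force ψ x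
  | or φ ψ, x => Force φ x ∨ Force ψ x
  | imp φ ψ, x => ∀ y, Sees x y → Force φ y → Force ψ y

theorem Force.persist {n : ℕ} {φ : PropForm (Fin n)} {x y : Gadget} (h : Force φ x)
    (hxy : Sees x y) : Force φ y := by
  induction φ with
  | var v =>
    cases x <;> cases y <;> simp only [Force, Sees] at * <;> omega
  | bot => simp [Force] at h
  | top => simp [Force]
  | and φ ψ ih1 ih2 =>
    simp only [Force] at *
    exact ⟨ih1 h.1, ih2 h.2⟩
  | or φ ψ ih1 ih2 =>
    simp only [Force] at *
    exact h.imp ih1 ih2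
  | imp φ ψ _ _ =>
    simp only [Force] at *
    exact fun z hz => h z (hxy.trans hz)

theorem _root_.Prov.force {n : ℕ} {Γ : Set (PropForm (Fin n))} {φ : PropForm (Fin n)}
    (h : IProv Γ φ) : ∀ x, (∀ γ ∈ Γ, Force γ x) → Force φ x := by
  induction h with
  | ax hmem => exact fun x hx => hx _ hmem
  | topI => simp [Force]
  | botE _ ih => intro x hx; exact (ih x hx).elim
  | andI _ _ ih1 ih2 => exact fun x hx => ⟨ih1 x hx, ih2 x hx⟩
  | andE1 _ ih => exact fun x hx => (ih x hx).1
  | andE2 _ ih => exact fun x hx => (ih x hx).2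
  | orI1 _ ih => exact fun x hx => Or.inl (ih x hx)
  | orI2 _ ih => exact fun x hx => Or.inr (ih x hx)
  | orE _ _ _ ih1 ih2 ih3 =>
    intro x hx
    rcases ih1 x hx with h | h
    · exact ih2 x (Set.forall_mem_insert.2 ⟨h, hx⟩)
    · exact ih3 x (Set.forall_mem_insert.2 ⟨h, hx⟩)
  | impI _ ih =>
    intro x hx y hxy hy
    exact ih y (Set.forall_mem_insert.2 ⟨hy, fun γ hγ => (hx γ hγ).persist hxy⟩)
  | impE _ _ ih1 ih2 => exact fun x hx => ih1 x hx x (Sees.refl x) (ih2 x hx)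
  | em h => exact h.elim

/-! ### The formulas in two variables -/

section Formulas

variable {n : ℕ} (hn : 2 ≤ n)

/-- The variable `p`. -/
def pVar : PropForm (Fin n) := var ⟨0, by omega⟩

/-- The variable `q`. -/
def qVar : PropForm (Fin n) := var ⟨1, by omega⟩

/-- The pair `(B_k, T_k)` of Rieger–Nishimura formulas: on the ladder, `B_k` defines the set of the
rungs below `k`, and `T_k` the set of the rungs seen from `k`. -/
def ladder : ℕ → PropForm (Fin n) × PropForm (Fin n)
  | 0 => (bot, pVar hn)
  | k + 1 => (or (ladder k).1 (ladder k).2, imp (ladder k).2 (ladder k).1)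

/-- The formula `q → B_k`, which bounds the rungs seen from a point. -/
def bound (k : ℕ) : PropForm (Fin n) := imp (qVar hn) (ladder hn k).1

/-- The formula `A_j`, which fails at `a_j` and at no other point of the gadget. -/
def sepA (j : ℕ) : PropForm (Fin n) := imp (bound hn (j + 1)) (or (qVar hn) (bound hn j))

/-- The formula `C_i = A_{2i} ∨ A_{2i+1}`, the translation of the variable `x_i`. -/
def sepC (i : ℕ) : PropForm (Fin n) := or (sepA hn (2 * i)) (sepA hn (2 * i + 1))

theorem force_ladder (j : ℕ) : ∀ k : ℕ,
    (Force (ladder hn j).1 (.inl k) ↔ k < j) ∧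
    (Force (ladder hn j).2 (.inl k) ↔ k = j ∨ k + 2 ≤ j) := by
  induction j with
  | zero => intro k; simp [ladder, Force, pVar]
  | succ j ih =>
    intro k
    refine ⟨?_, ?_⟩
    · simp only [ladder, Force, (ih k).1, (ih k).2]
      omega
    · simp only [ladder, Force]
      constructor
      · intro h
        by_contra hk
        have h1 : Force (ladder hn j).1 (.inl j) := by
          by_cases hkj : k < j
          · omega
          · exact h (.inl j) (by simp only [Sees]; omega) ((ih j).2.2 (Or.inl rfl))
        exact lt_irrefl _ ((ih j).1.1 h1)
      · rintro hk (l | l) hl hT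
        · rw [(ih l).1]
          rw [(ih l).2] at hT
          simp only [Sees] at hl
          omega
        · simp [Sees] at hl

theorem force_qVar_inl (k : ℕ) : Force (qVar hn) (.inl k) := by simp [Force, qVar]

theorem not_force_qVar_inr (j : ℕ) : ¬ Force (qVar hn) (.inr j) := by simp [Force, qVar]

theorem force_bound_inr (j k : ℕ) : Force (bound hn k) (.inr j) ↔ j < k := by
  simp only [bound, Force]
  constructor
  · intro h
    exact ((force_ladder hn k j).1).1 (h (.inl j) le_rfl (force_qVar_inl hn j))
  · rintro hjk (l | l) hl hq
    · simp only [Sees] at hl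
      exact ((force_ladder hn k l).1).2 (by omega)
    · exact (not_force_qVar_inr hn l hq).elim

theorem force_sepA (j : ℕ) (x : Gadget) : Force (sepA hn j) x ↔ x ≠ .inr j := by
  constructor
  · rintro h rfl
    rcases h (.inr j) (Sees.refl _) ((force_bound_inr hn j (j + 1)).2 (by omega)) with h | h
    · exact not_force_qVar_inr hn j h
    · exact lt_irrefl _ ((force_bound_inr hn j j).1 h)
  · rintro hx (l | l) hl hb
    · exact Or.inl (force_qVar_inl hn l)
    · refine Or.inr ((force_bound_inr hn l j).2 ?_)
      have h1 := (force_bound_inr hn l (j + 1)).1 hb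
      have h2 : l ≠ j := by
        rintro rfl
        rcases x with x | x
        · exact hl
        · exact hx (congrArg Sum.inr (Eq.symm hl))
      omega

theorem force_sepC (i : ℕ) (x : Gadget) : Force (sepC hn i) x := by
  simp only [sepC, Force, force_sepA]
  by_contra h
  push Not at h
  have := Sum.inr_injective (h.1.symm.trans h.2)
  omega

/-! ### The translation -/

/-- The translation: `x_i` is replaced by `C_i`, and `⊥` by `C_0 ∧ … ∧ C_m`. -/
def subst {m : ℕ} : PropForm (Fin m) → PropForm (Fin n)
  | var i => sepC hn i
  | bot => conj ((List.range (m + 1)).map (sepC hn))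
  | top => top
  | and φ ψ => and (subst φ) (subst ψ)
  | or φ ψ => or (subst φ) (subst ψ)
  | imp φ ψ => imp (subst φ) (subst ψ)

/-- The translation of `⊥` obeys ex falso with respect to translated formulas. -/
theorem prov_subst_of_bot {m : ℕ} {Γ : Set (PropForm (Fin n))} {φ : PropForm (Fin m)}
    (h : IProv Γ (subst hn (bot : PropForm (Fin m)))) : IProv Γ (subst hn φ) := by
  induction φ with
  | var i =>
    exact prov_conj.1 h _ (List.mem_map.2 ⟨i, List.mem_range.2 (by omega), rfl⟩)
  | bot => exact h
  | top => exact .topI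
  | and φ ψ ih1 ih2 => exact .andI ih1 ih2
  | or φ ψ ih1 ih2 => exact .orI1 ih1
  | imp φ ψ ih1 ih2 => exact .impI (ih2.mono (Set.subset_insert _ _))

theorem _root_.Prov.subst {m : ℕ} {Γ : Set (PropForm (Fin m))} {φ : PropForm (Fin m)}
    (h : IProv Γ φ) : IProv (subst hn '' Γ) (subst hn φ) := by
  induction h with
  | ax hmem => exact .ax (Set.mem_image_of_mem _ hmem)
  | topI => exact .topI
  | botE _ ih => exact prov_subst_of_bot hn ih
  | andI _ _ ih1 ih2 => exact .andI ih1 ih2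
  | andE1 _ ih => exact .andE1 ih
  | andE2 _ ih => exact .andE2 ih
  | orI1 _ ih => exact .orI1 ih
  | orI2 _ ih => exact .orI2 ih
  | orE _ _ _ ih1 ih2 ih3 =>
    rw [Set.image_insert_eq] at ih2 ih3
    exact .orE ih1 ih2 ih3
  | impI _ ih =>
    rw [Set.image_insert_eq] at ih
    exact .impI ih
  | impE _ _ ih1 ih2 => exact .impE ih1 ih2
  | em h => exact h.elim

theorem force_conj {l : List (PropForm (Fin n))} {x : Gadget} (h : ∀ χ ∈ l, Force χ x) :
    Force (conj l) x := by
  induction l with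
  | nil => trivial
  | cons χ l ih =>
    rw [List.forall_mem_cons] at h
    exact ⟨h.1, ih h.2⟩

theorem force_subst {m : ℕ} (φ : PropForm (Fin m)) : ∀ x, Force (subst hn φ) x := by
  induction φ with
  | var i => exact force_sepC hn i
  | bot =>
    intro x
    refine force_conj fun χ hχ => ?_
    obtain ⟨i, -, rfl⟩ := List.mem_map.1 hχ
    exact force_sepC hn i x
  | top => exact fun _ => trivial
  | and φ ψ ih1 ih2 => exact fun x => ⟨ih1 x, ih2 x⟩
  | or φ ψ ih1 ih2 => exact fun x => Or.inl (ih1 x)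
  | imp φ ψ ih1 ih2 => exact fun x y _ _ => ih2 y

end Formulas

/-! ### Gluing a model below the gadget -/

/-- The formula `avoid x` describes the worlds below the gadget that do not see the point `x`: none
for a rung of the ladder, those satisfying `x_i` for `a_{2i}` and `a_{2i+1}` with `i < m`, and none
for the remaining points `a_j`. -/
def avoid (m : ℕ) : Gadget → PropForm (Fin m)
  | .inl _ => bot
  | .inr j => if h : j / 2 < m then var ⟨j / 2, h⟩ else bot

theorem avoid_mem (m : ℕ) (x : Gadget) : avoid m x ∈ bot :: List.ofFn var := by
  rcases x with k | j
  · simp [avoid]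
  · by_cases h : j / 2 < m
    · simp [avoid, h]
    · simp [avoid, h]

open Classical in
/-- The formula describing the worlds below the gadget that see points of `U` only.  It is the
conjunction of all `avoid m x` with `x ∉ U`, which are finitely many formulas. -/
noncomputable def seesOnly (m : ℕ) (U : Gadget → Prop) : PropForm (Fin m) :=
  conj ((bot :: List.ofFn var).filter fun χ => ∃ x, ¬ U x ∧ avoid m x = χ)

theorem prov_seesOnly {m : ℕ} {U : Gadget → Prop} {Γ : Set (PropForm (Fin m))} :
    IProv Γ (seesOnly m U) ↔ ∀ x, ¬ U x → IProv Γ (avoid m x) := by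
  simp only [seesOnly, prov_conj, List.mem_filter, decide_eq_true_eq]
  constructor
  · exact fun h x hx => h _ ⟨avoid_mem m x, x, hx, rfl⟩
  · rintro h χ ⟨-, x, hx, rfl⟩
    exact h x hx

/-- The formula `glue m ψ` describes the worlds below the gadget at which `ψ` holds; all variables
are false at these worlds.  An implication has to hold both among the worlds and at the points of
the gadget that are seen. -/
noncomputable def glue (m : ℕ) {n : ℕ} : PropForm (Fin n) → PropForm (Fin m)
  | var _ => bot
  | bot => bot
  | top => top
  | and φ ψ => and (glue m φ) (glue m ψ)
  | or φ ψ => or (glue m φ) (glue m ψ)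
  | imp φ ψ => and (imp (glue m φ) (glue m ψ)) (seesOnly m (Force (imp φ ψ)))

/-- Persistence from the glued worlds to the gadget. -/
theorem prov_avoid_of_glue {m n : ℕ} {ψ : PropForm (Fin n)} {x : Gadget} (hx : ¬ Force ψ x) :
    ∀ {Γ : Set (PropForm (Fin m))}, IProv Γ (glue m ψ) → IProv Γ (avoid m x) := by
  induction ψ with
  | var v => exact fun h => .botE h
  | bot => exact fun h => .botE h
  | top => exact (hx trivial).elim
  | and φ ψ ih1 ih2 =>
    intro Γ h
    by_cases h1 : Force φ x
    · exact ih2 (fun h2 => hx ⟨h1, h2⟩) h.andE2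
    · exact ih1 h1 h.andE1
  | or φ ψ ih1 ih2 =>
    intro Γ h
    exact .orE h (ih1 (fun h1 => hx (Or.inl h1)) (.ax (Set.mem_insert _ _)))
      (ih2 (fun h2 => hx (Or.inr h2)) (.ax (Set.mem_insert _ _)))
  | imp φ ψ _ _ => exact fun h => prov_seesOnly.1 h.andE2 x hx

theorem _root_.Prov.glue (m : ℕ) {n : ℕ} {Γ : Set (PropForm (Fin n))} {φ : PropForm (Fin n)}
    (h : IProv Γ φ) : IProv (glue m '' Γ) (glue m φ) := by
  induction h with
  | ax hmem => exact .ax (Set.mem_image_of_mem _ hmem)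
  | topI => exact .topI
  | botE _ ih => exact .botE ih
  | andI _ _ ih1 ih2 => exact .andI ih1 ih2
  | andE1 _ ih => exact .andE1 ih
  | andE2 _ ih => exact .andE2 ih
  | orI1 _ ih => exact .orI1 ih
  | orI2 _ ih => exact .orI2 ih
  | orE _ _ _ ih1 ih2 ih3 =>
    rw [Set.image_insert_eq] at ih2 ih3
    exact .orE ih1 ih2 ih3
  | @impI Γ φ ψ h ih =>
    rw [Set.image_insert_eq] at ih
    refine .andI (.impI ih) (prov_seesOnly.2 fun x hx => ?_)
    -- By soundness in the gadget, a premise already fails at `x`, so it excludes seeing `x`.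
    have hx' : ¬ ∀ γ ∈ Γ, Force γ x := fun hΓ => hx (Prov.force (.impI h) x hΓ)
    push Not at hx'
    obtain ⟨γ, hγ, hγx⟩ := hx'
    exact prov_avoid_of_glue hγx (.ax (Set.mem_image_of_mem _ hγ))
  | impE _ _ ih1 ih2 => exact .impE ih1.andE1 ih2
  | em h => exact h.elim

section GlueSubst

variable {n : ℕ} (hn : 2 ≤ n)

/-- No glued world satisfies `q → B_k`, since it sees the rung `k`. -/
theorem prov_bot_of_glue_bound {m k : ℕ} {Γ : Set (PropForm (Fin m))}
    (h : IProv Γ (glue m (bound hn k))) : IProv Γ bot := by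
  refine prov_avoid_of_glue (x := .inl k) (fun hk => ?_) h
  exact lt_irrefl _ ((force_ladder hn k k).1.1 (hk (.inl k) (Sees.refl _) (force_qVar_inl hn k)))

theorem prov_glue_sepA {m j : ℕ} {Γ : Set (PropForm (Fin m))} :
    IProv Γ (glue m (sepA hn j)) ↔ IProv Γ (avoid m (.inr j)) := by
  constructor
  · exact prov_avoid_of_glue (by simp [force_sepA])
  · intro h
    refine .andI (.impI (.botE (prov_bot_of_glue_bound hn (.ax (Set.mem_insert _ _)))))
      (prov_seesOnly.2 fun x hx => ?_)
    have hx' : ¬ Force (sepA hn j) x := hx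
    rw [force_sepA, not_not] at hx'
    exact hx' ▸ h

theorem prov_glue_sepC {m i : ℕ} {Γ : Set (PropForm (Fin m))} :
    IProv Γ (glue m (sepC hn i)) ↔ IProv Γ (avoid m (.inr (2 * i))) := by
  have hi : avoid m (.inr (2 * i + 1)) = avoid m (.inr (2 * i)) := by
    have h1 : (2 * i + 1) / 2 = 2 * i / 2 := by omega
    simp only [avoid, h1]
  constructor
  · intro h
    refine .orE h ((prov_glue_sepA hn).1 (.ax (Set.mem_insert _ _))) ?_
    rw [← hi]
    exact (prov_glue_sepA hn).1 (.ax (Set.mem_insert _ _))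
  · exact fun h => .orI1 ((prov_glue_sepA hn).2 h)

theorem prov_glue_conj {m : ℕ} {Γ : Set (PropForm (Fin m))} {l : List (PropForm (Fin n))}
    (h : IProv Γ (glue m (conj l))) : ∀ χ ∈ l, IProv Γ (glue m χ) := by
  induction l with
  | nil => simp
  | cons χ l ih => exact List.forall_mem_cons.2 ⟨h.andE1, ih h.andE2⟩

/-- At the worlds below the gadget, a formula is equivalent to its translation. -/
theorem glue_subst {m : ℕ} (φ : PropForm (Fin m)) :
    ∀ {Γ : Set (PropForm (Fin m))}, IProv Γ (glue m (subst hn φ)) ↔ IProv Γ φ := by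
  induction φ with
  | var i =>
    intro Γ
    simp only [subst, prov_glue_sepC]
    have h1 : 2 * i.val / 2 = i.val := by omega
    simp [avoid, h1]
  | bot =>
    intro Γ
    refine ⟨fun h => ?_, fun h => .botE h⟩
    -- The conjunct `C_m` corresponds to no variable and holds at no world.
    have hC := prov_glue_conj h (sepC hn m)
      (List.mem_map.2 ⟨m, List.mem_range.2 (by omega), rfl⟩)
    have h1 : 2 * m / 2 = m := by omega
    simpa [prov_glue_sepC, avoid, h1] using hC
  | top => exact ⟨fun _ => .topI, fun _ => .topI⟩
  | and φ ψ ih1 ih2 =>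
    exact ⟨fun h => .andI (ih1.1 h.andE1) (ih2.1 h.andE2),
      fun h => .andI (ih1.2 h.andE1) (ih2.2 h.andE2)⟩
  | or φ ψ ih1 ih2 =>
    exact ⟨fun h => .orE h (.orI1 (ih1.1 (.ax (Set.mem_insert _ _))))
        (.orI2 (ih2.1 (.ax (Set.mem_insert _ _)))),
      fun h => .orE h (.orI1 (ih1.2 (.ax (Set.mem_insert _ _))))
        (.orI2 (ih2.2 (.ax (Set.mem_insert _ _))))⟩
  | imp φ ψ ih1 ih2 =>
    intro Γ
    constructor
    · intro h
      exact .impI (ih2.1 (.impE (h.andE1.mono (Set.subset_insert _ _))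
        (ih1.2 (.ax (Set.mem_insert _ _)))))
    · intro h
      refine .andI (.impI (ih2.2 (.impE (h.mono (Set.subset_insert _ _))
        (ih1.1 (.ax (Set.mem_insert _ _)))))) (prov_seesOnly.2 fun x hx => ?_)
      exact (hx (force_subst hn (imp φ ψ) x)).elim

end GlueSubst

/-- Cut for an arbitrary set of premises. -/
theorem prov_of_forall_prov {V : Type} {cl : Prop} {Γ : Set (PropForm V)} {φ : PropForm V}
    (h : Prov cl Γ φ) : ∀ {Δ : Set (PropForm V)}, (∀ γ ∈ Γ, Prov cl Δ γ) → Prov cl Δ φ := by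
  have lift : ∀ {Γ Δ : Set (PropForm V)} (χ : PropForm V), (∀ γ ∈ Γ, Prov cl Δ γ) →
      ∀ γ ∈ insert χ Γ, Prov cl (insert χ Δ) γ := fun χ hΔ =>
    Set.forall_mem_insert.2 ⟨.ax (Set.mem_insert _ _),
      fun γ hγ => (hΔ γ hγ).mono (Set.subset_insert _ _)⟩
  induction h with
  | ax hmem => exact fun hΔ => hΔ _ hmem
  | topI => exact fun _ => .topI
  | botE _ ih => exact fun hΔ => .botE (ih hΔ)
  | andI _ _ ih1 ih2 => exact fun hΔ => .andI (ih1 hΔ) (ih2 hΔ)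
  | andE1 _ ih => exact fun hΔ => .andE1 (ih hΔ)
  | andE2 _ ih => exact fun hΔ => .andE2 (ih hΔ)
  | orI1 _ ih => exact fun hΔ => .orI1 (ih hΔ)
  | orI2 _ ih => exact fun hΔ => .orI2 (ih hΔ)
  | orE _ _ _ ih1 ih2 ih3 => exact fun hΔ => .orE (ih1 hΔ) (ih2 (lift _ hΔ)) (ih3 (lift _ hΔ))
  | impI _ ih => exact fun hΔ => .impI (ih (lift _ hΔ))
  | impE _ _ ih1 ih2 => exact fun hΔ => .impE (ih1 hΔ) (ih2 hΔ)
  | em h => exact fun _ => .em h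

theorem prov_iff_prov_subst {m n : ℕ} (hn : 2 ≤ n) (Γ : Set (PropForm (Fin m)))
    (φ : PropForm (Fin m)) : IProv Γ φ ↔ IProv (subst hn '' Γ) (subst hn φ) := by
  refine ⟨Prov.subst hn, fun h => (glue_subst hn φ).1 ?_⟩
  refine prov_of_forall_prov (Prov.glue m h) ?_
  rintro _ ⟨_, ⟨γ, hγ, rfl⟩, rfl⟩
  exact (glue_subst hn γ).2 (.ax hγ)

end PropForm

/-- For `m ≥ 1` and `n ≥ 2` there is a consequence- and tautology-respecting translation
from `m`-variable intuitionistic logic to `n`-variable intuitionistic logic. -/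
theorem exists_consequence_tautology_respecting_translation (m n : ℕ) (hm : 1 ≤ m) (hn : 2 ≤ n) :
    ∃ f : PropForm (Fin m) → PropForm (Fin n),
      (∀ Γ : Set (PropForm (Fin m)), Γ.Nonempty →
        ∀ φ : PropForm (Fin m), (IProv Γ φ ↔ IProv (f '' Γ) (f φ))) ∧
      (∀ φ : PropForm (Fin m), (IProv (∅ : Set (PropForm (Fin m))) φ ↔
        IProv (∅ : Set (PropForm (Fin n))) (f φ))) := by
  refine ⟨PropForm.subst hn, fun Γ _ φ => PropForm.prov_iff_prov_subst hn Γ φ, fun φ => ?_⟩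
  simpa using PropForm.prov_iff_prov_subst hn ∅ φ
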